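/- arXiv:2109.01221 — 2 statements merged into one kernel-verified Lean document; each statement's English description precedes it below -/
import Mathlib

section
/- Let X = {x_1, ..., x_n} be a nonempty finite set of n distinct integers, each greater than 1, and let D = {1, 0} ∪ X. Then diam(D) = 3 if n = 1 and diam(D) = 4 if n > 1. -/
/-! The lower bounds rest on the fact that a vertex of a nontrivial tree whose signed degree is
not `1` or `-1` is not a leaf. If `u` and `v` are non-leaves of a tree, the path between them
extends by one edge at each end (some neighbour of each end is off the path, and by acyclicity the
result is still a path), so the diameter is at least `dist u v + 2`
(`dist_add_two_le_diam`). The vertices realizing `0` and an element of `X` give diameter at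
least `3`. If `X` has two elements, three vertices of signed degrees `0`, `x`, `y` cannot be
pairwise adjacent in a tree, so two of them are at distance at least `2` and the diameter is at
least `4`.

The upper bounds come from rooted trees of depth at most two (`spiderWeight`): a root, children `i`
joined to the root by an edge of sign `ε i`, and `k i` leaves joined positively to child `i`. The
root has signed degree `∑ ε i`, child `i` has `ε i + k i`, and leaves have `1`. For `X = {x}`
take `x + 1` positive children without leaves and one negative child with one leaf. For larger
`X` take a positive child with `x - 1` leaves and a negative child with one leaf for each `x ∈ X`.
-/

/-- A signed tree: a finite tree (on vertex type `Fin n`) together with an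
assignment of a sign to each possible edge (`true` = positive, `false` = negative). -/
structure SignedTree where
  n : ℕ
  G : SimpleGraph (Fin n)
  adjDec : DecidableRel G.Adj
  isTree : G.IsTree
  sgn : Sym2 (Fin n) → Bool

namespace SignedTree

/-- The (unsigned) degree of a vertex in the underlying tree. -/
def deg (T : SignedTree) (v : Fin T.n) : ℕ :=
  letI := T.adjDec
  T.G.degree v

/-- The signed degree of a vertex: the number of positive edges incident to it
minus the number of negative edges incident to it. -/
def sdeg (T : SignedTree) (v : Fin T.n) : ℤ :=
  letI := T.adjDec
  ((((T.G.neighborFinset v).filter fun w => T.sgn s(v, w) = true).card : ℤ)) -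
  ((((T.G.neighborFinset v).filter fun w => T.sgn s(v, w) = false).card : ℤ))

/-- The signed tree `T` realizes the set `D` if `D` is exactly the set of signed
degrees of the vertices of `T`. -/
def Realizes (T : SignedTree) (D : Set ℤ) : Prop :=
  D = Set.range T.sdeg

end SignedTree

/-- `diamOfSet D` is the minimum diameter of the underlying tree over all
signed trees realizing `D`. -/
noncomputable def diamOfSet (D : Set ℤ) : ℕ :=
  sInf {k : ℕ | ∃ T : SignedTree, T.Realizes D ∧ T.G.diam = k}

/-- `orderOfSet D` is the minimum number of vertices of the underlying tree over
all signed trees realizing `D`. -/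
noncomputable def orderOfSet (D : Set ℤ) : ℕ :=
  sInf {k : ℕ | ∃ T : SignedTree, T.Realizes D ∧ T.n = k}

/-! ### Lower bounds -/

/-- In an acyclic graph, a path starting at a non-leaf extends beyond its start: the start
has a neighbour off the path. -/
lemma exists_adj_notMem_support {V : Type*} [Fintype V] {G : SimpleGraph V} [DecidableRel G.Adj]
    (hG : G.IsAcyclic) {u v : V} (p : G.Walk u v) (hp : p.IsPath) (hu : 2 ≤ G.degree u) :
    ∃ a, G.Adj u a ∧ a ∉ p.support := by
  classical
  have hu' : 1 < (G.neighborFinset u).card := hu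
  obtain ⟨a, ha, hne⟩ := Finset.exists_mem_ne hu' p.snd
  rw [SimpleGraph.mem_neighborFinset] at ha
  exact ⟨a, ha, fun h => hne (hG.eq_snd_of_adj_start hp ha h)⟩

/-- The path between two non-leaves of a tree extends by one edge beyond each end. -/
lemma dist_add_two_le_diam {V : Type*} [Fintype V] {G : SimpleGraph V} [DecidableRel G.Adj]
    (hG : G.IsTree) {u v : V} (hu : 2 ≤ G.degree u) (hv : 2 ≤ G.degree v) :
    G.dist u v + 2 ≤ G.diam := by
  classical
  obtain ⟨p, hp, hl⟩ := hG.connected.exists_path_of_dist u v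
  obtain ⟨a, ha, hap⟩ := exists_adj_notMem_support hG.isAcyclic p hp hu
  have hq : (SimpleGraph.Walk.cons ha.symm p).reverse.IsPath :=
    (SimpleGraph.Walk.cons_isPath_iff _ _ |>.2 ⟨hp, hap⟩).reverse
  obtain ⟨b, hb, hbq⟩ := exists_adj_notMem_support hG.isAcyclic _ hq hv
  have hr := (SimpleGraph.Walk.cons_isPath_iff hb.symm _).2 ⟨hq, hbq⟩
  have hne : Nonempty V := ⟨u⟩
  have h1 : G.dist b a ≤ G.diam :=
    SimpleGraph.dist_le_diam (SimpleGraph.connected_iff_ediam_ne_top.1 hG.connected)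
  obtain ⟨s, hs, hsl⟩ := hG.connected.exists_path_of_dist b a
  have h2 := congrArg (fun q : G.Path b a => q.1.length)
    ((hG.isAcyclic.subsingleton_path b a).elim ⟨_, hr⟩ ⟨s, hs⟩)
  simp at h2
  omega

namespace SignedTree

/-- The vertex `v` makes the tree nontrivial, so `u` is not isolated; and the signed degree of a
leaf is the sign of its only edge. -/
lemma two_le_degree (T : SignedTree) {u v : Fin T.n} (huv : u ≠ v)
    (h1 : T.sdeg u ≠ 1) (h2 : T.sdeg u ≠ -1) : 2 ≤ T.deg u := by
  let := T.adjDec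
  have hnt : Nontrivial (Fin T.n) := ⟨u, v, huv⟩
  have hpos : 0 < T.G.degree u := T.isTree.connected.preconnected.degree_pos_of_nontrivial u
  have hsum := Finset.card_filter_add_card_filter_not (s := T.G.neighborFinset u)
    (fun w => T.sgn s(u, w) = true)
  rw [SimpleGraph.card_neighborFinset_eq_degree] at hsum
  simp only [Bool.not_eq_true] at hsum
  unfold sdeg at h1 h2
  unfold deg
  omega

lemma three_le_diam (T : SignedTree) {u v : Fin T.n} (hu : T.sdeg u = 0) (hv : 1 < T.sdeg v) :
    3 ≤ T.G.diam := by
  let := T.adjDec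
  have huv : u ≠ v := by rintro rfl; omega
  have := dist_add_two_le_diam T.isTree (T.two_le_degree huv (by omega) (by omega))
    (T.two_le_degree huv.symm (by omega) (by omega))
  have := T.isTree.connected.pos_dist_of_ne huv
  omega

lemma four_le_diam (T : SignedTree) {u v w : Fin T.n} (hu : T.sdeg u = 0) (hv : 1 < T.sdeg v)
    (hw : 1 < T.sdeg w) (hvw : T.sdeg v ≠ T.sdeg w) : 4 ≤ T.G.diam := by
  let := T.adjDec
  have huv : u ≠ v := by rintro rfl; omega
  have huw : u ≠ w := by rintro rfl; omega
  have hvw' : v ≠ w := by rintro rfl; omega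
  have du := T.two_le_degree huv (by omega) (by omega)
  have dv := T.two_le_degree huv.symm (by omega) (by omega)
  have dw := T.two_le_degree huw.symm (by omega) (by omega)
  have a1 := dist_add_two_le_diam T.isTree du dv
  have a2 := dist_add_two_le_diam T.isTree du dw
  have a3 := dist_add_two_le_diam T.isTree dv dw
  have b1 := T.isTree.connected.pos_dist_of_ne huv
  have b2 := T.isTree.connected.pos_dist_of_ne huw
  have b3 := T.isTree.connected.pos_dist_of_ne hvw'
  by_contra hlt
  -- Otherwise `v` and `w` are adjacent and both at distance `1` from `u`.
  have hadj : T.G.Adj v w := SimpleGraph.dist_eq_one_iff_adj.1 (by omega)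
  have := T.isTree.dist_ne_of_adj u hadj
  omega

end SignedTree

/-! ### Signed trees from weight functions -/

/-- A symmetric weight with values in `{0, 1, -1}` whose support is a tree gives a signed tree
whose signed degrees are the row sums of the weight. -/
lemma exists_signedTree {V : Type*} [Fintype V] (w : V → V → ℤ) (hsymm : ∀ a b, w a b = w b a)
    (hval : ∀ a b, w a b = 0 ∨ w a b = 1 ∨ w a b = -1) (G : SimpleGraph V)
    (hG : ∀ a b, G.Adj a b ↔ w a b ≠ 0) (htree : G.IsTree) (d : ℕ)
    (hd : ∀ a b, G.dist a b ≤ d) :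
    ∃ T : SignedTree, T.Realizes (Set.range fun v => ∑ u, w v u) ∧ T.G.diam ≤ d := by
  classical
  let e := Fintype.equivFin V
  let f : G.comap e.symm ≃g G := SimpleGraph.Iso.comap e.symm G
  have hT : (G.comap e.symm).IsTree := f.isTree_iff.2 htree
  let T : SignedTree :=
    { n := Fintype.card V
      G := G.comap e.symm
      adjDec := Classical.decRel _
      isTree := hT
      sgn := Sym2.lift ⟨fun a b => decide (0 < w (e.symm a) (e.symm b)), fun a b => by
        dsimp only
        rw [hsymm]⟩ }
  refine ⟨T, ?_, ?_⟩
  · have hs : ∀ v : Fin (Fintype.card V), T.sdeg v = ∑ u, w (e.symm v) u := by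
      intro v
      rw [← e.symm.sum_comp]
      unfold SignedTree.sdeg
      rw [SimpleGraph.neighborFinset_eq_filter, Finset.filter_filter, Finset.filter_filter,
        Finset.card_filter, Finset.card_filter]
      push_cast
      rw [← Finset.sum_sub_distrib]
      refine Finset.sum_congr rfl fun u _ => ?_
      have hadj : T.G.Adj v u ↔ w (e.symm v) (e.symm u) ≠ 0 := hG _ _
      have hsgn : T.sgn s(v, u) = decide (0 < w (e.symm v) (e.symm u)) := rfl
      rw [hsgn]
      simp only [hadj]
      rcases hval (e.symm v) (e.symm u) with h | h | h <;> simp [h]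
    ext z
    constructor
    · rintro ⟨v, rfl⟩
      exact ⟨e v, by rw [hs]; simp⟩
    · rintro ⟨v, rfl⟩
      exact ⟨e.symm v, (hs v).symm⟩
  · have : Nonempty (Fin (Fintype.card V)) := hT.connected.nonempty
    obtain ⟨a, b, hab⟩ := (G.comap e.symm).exists_dist_eq_diam
    change (G.comap e.symm).diam ≤ d
    rw [← hab]
    obtain ⟨p, hp⟩ := htree.connected.exists_walk_length_eq_dist (e.symm a) (e.symm b)
    let q := p.map f.symm.toHom
    have hq : q.length = p.length := SimpleGraph.Walk.length_map _ _
    have ha : f.symm.toHom (e.symm a) = a := e.apply_symm_apply a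
    have hb : f.symm.toHom (e.symm b) = b := e.apply_symm_apply b
    have := SimpleGraph.dist_le q
    rw [hq, ha, hb] at this
    have := hd (e.symm a) (e.symm b)
    omega

/-- A connected graph in which every edge joins some non-root vertex to its parent is a tree. -/
lemma isTree_of_parent {V : Type*} [Fintype V] {G : SimpleGraph V} (hc : G.Connected) (r : V)
    (p : V → V) (h : ∀ a b, G.Adj a b → (a ≠ r ∧ p a = b) ∨ (b ≠ r ∧ p b = a)) : G.IsTree := by
  classical
  rw [SimpleGraph.isTree_iff_connected_and_card]
  refine ⟨hc, le_antisymm ?_ hc.card_vert_le_card_edgeSet_add_one⟩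
  have hsub : G.edgeSet ⊆ ↑((Finset.univ.erase r).image fun v => s(v, p v)) := by
    intro e
    induction e with
    | _ a b =>
      intro hab
      simp only [Finset.coe_image, Set.mem_image, Finset.coe_erase, Finset.coe_univ]
      rcases h a b hab with ⟨h1, h2⟩ | ⟨h1, h2⟩
      · exact ⟨a, by simp [h1], by rw [h2]⟩
      · exact ⟨b, by simp [h1], by rw [h2, Sym2.eq_swap]⟩
  have h1 := Set.ncard_le_ncard hsub (Finset.finite_toSet _)
  rw [Set.ncard_coe_finset] at h1
  have h2 := Finset.card_image_le (s := Finset.univ.erase r) (f := fun v => s(v, p v))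
  rw [Finset.card_erase_of_mem (Finset.mem_univ r), Finset.card_univ] at h2
  have h3 : 0 < Fintype.card V := Fintype.card_pos_iff.2 ⟨r⟩
  rw [Nat.card_coe_set_eq, Nat.card_eq_fintype_card]
  omega

/-! ### Rooted trees of depth two -/

section Spider

/-- Vertices of the rooted tree of depth two with children indexed by `I` and `k i` leaves below
child `i`: the root, the children, the leaves. -/
abbrev SpiderVert {I : Type} (k : I → ℕ) : Type := Unit ⊕ I ⊕ (Σ i, Fin (k i))

variable {I : Type} [DecidableEq I] (k : I → ℕ) (ε : I → ℤ)

/-- The signed adjacency matrix: `ε i` between the root and child `i`, and `1` between a child and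
each of its leaves. -/
def spiderWeight : SpiderVert k → SpiderVert k → ℤ
  | .inl _, .inr (.inl i) => ε i
  | .inr (.inl i), .inl _ => ε i
  | .inr (.inl i), .inr (.inr l) => if l.1 = i then 1 else 0
  | .inr (.inr l), .inr (.inl i) => if l.1 = i then 1 else 0
  | _, _ => 0

/-- The level of a vertex: `0` for the root, `1` for the children, `2` for the leaves. -/
def spiderDepth : SpiderVert k → ℕ
  | .inl _ => 0
  | .inr (.inl _) => 1
  | .inr (.inr _) => 2

/-- The parent of a vertex, with the root as its own parent. -/
def spiderParent : SpiderVert k → SpiderVert k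
  | .inl _ => .inl ()
  | .inr (.inl _) => .inl ()
  | .inr (.inr l) => .inr (.inl l.1)

lemma spiderWeight_symm (a b : SpiderVert k) : spiderWeight k ε a b = spiderWeight k ε b a := by
  rcases a with _ | i | l <;> rcases b with _ | j | m <;> rfl

lemma spiderWeight_self (a : SpiderVert k) : spiderWeight k ε a a = 0 := by
  rcases a with _ | i | l <;> rfl

/-- The underlying graph of `spiderWeight`. -/
def spiderGraph : SimpleGraph (SpiderVert k) where
  Adj a b := spiderWeight k ε a b ≠ 0
  symm := ⟨fun a b h => by rwa [spiderWeight_symm]⟩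
  loopless := ⟨fun a h => h (spiderWeight_self k ε a)⟩

lemma spider_exists_walk (hε : ∀ i, ε i ≠ 0) (a : SpiderVert k) :
    ∃ p : (spiderGraph k ε).Walk (.inl ()) a, p.length = spiderDepth k a := by
  have h1 : ∀ i, (spiderGraph k ε).Adj (.inl ()) (.inr (.inl i)) := fun i => hε i
  have h2 : ∀ l : Σ i, Fin (k i), (spiderGraph k ε).Adj (.inr (.inl l.1)) (.inr (.inr l)) :=
    fun l => by simp [spiderGraph, spiderWeight]
  rcases a with _ | i | l
  · exact ⟨.nil, rfl⟩
  · exact ⟨.cons (h1 i) .nil, rfl⟩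
  · exact ⟨.cons (h1 l.1) (.cons (h2 l) .nil), rfl⟩

lemma spiderGraph_connected (hε : ∀ i, ε i ≠ 0) : (spiderGraph k ε).Connected :=
  SimpleGraph.connected_iff_exists_forall_reachable _ |>.2
    ⟨.inl (), fun a => ⟨(spider_exists_walk k ε hε a).choose⟩⟩

lemma spiderGraph_isTree [Fintype I] (hε : ∀ i, ε i ≠ 0) : (spiderGraph k ε).IsTree := by
  refine isTree_of_parent (spiderGraph_connected k ε hε) (.inl ()) (spiderParent k) ?_
  intro a b hab
  rcases a with _ | i | l <;> rcases b with _ | j | m <;>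
    simp_all [spiderGraph, spiderWeight, spiderParent]

lemma spiderGraph_dist_le (hε : ∀ i, ε i ≠ 0) (d : ℕ)
    (hd : ∀ a b, a ≠ b → spiderDepth k a + spiderDepth k b ≤ d) (a b : SpiderVert k) :
    (spiderGraph k ε).dist a b ≤ d := by
  by_cases hab : a = b
  · simp [hab]
  · obtain ⟨p, hp⟩ := spider_exists_walk k ε hε a
    obtain ⟨q, hq⟩ := spider_exists_walk k ε hε b
    have := SimpleGraph.dist_le (p.reverse.append q)
    rw [SimpleGraph.Walk.length_append, SimpleGraph.Walk.length_reverse] at this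
    have := hd a b hab
    omega

/-- The set realized by the rooted tree of depth two, with a bound on its diameter. -/
lemma exists_spider [Fintype I] (hε : ∀ i, ε i = 1 ∨ ε i = -1) (d : ℕ)
    (hd : ∀ a b, a ≠ b → spiderDepth k a + spiderDepth k b ≤ d) (D : Set ℤ)
    (hD : ∀ z, z ∈ D ↔ z = ∑ i, ε i ∨ (∃ i, z = ε i + k i) ∨ ((∃ i, k i ≠ 0) ∧ z = 1)) :
    ∃ T : SignedTree, T.Realizes D ∧ T.G.diam ≤ d := by
  have hε0 : ∀ i, ε i ≠ 0 := fun i => by rcases hε i with h | h <;> simp [h]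
  obtain ⟨T, hT, hTd⟩ := exists_signedTree (spiderWeight k ε) (spiderWeight_symm k ε) (by
      intro a b
      rcases a with _ | i | l <;> rcases b with _ | j | m <;> simp only [spiderWeight] <;>
        first
        | (simp; done)
        | exact Or.inr (hε _)
        | (split_ifs <;> simp))
    (spiderGraph k ε) (fun _ _ => Iff.rfl) (spiderGraph_isTree k ε hε0) d
    (spiderGraph_dist_le k ε hε0 d hd)
  refine ⟨T, ?_, hTd⟩
  convert hT using 1
  have root : ∑ u, spiderWeight k ε (.inl ()) u = ∑ i, ε i := by
    simp [Fintype.sum_sum_type, spiderWeight]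
  have child : ∀ i, ∑ u, spiderWeight k ε (.inr (.inl i)) u = ε i + k i := fun i => by
    simp only [Fintype.sum_sum_type, Fintype.sum_sigma, spiderWeight]
    simp [apply_ite Finset.card]
  have leaf : ∀ l, ∑ u, spiderWeight k ε (.inr (.inr l)) u = 1 := fun l => by
    simp [Fintype.sum_sum_type, spiderWeight]
  ext z
  rw [hD]
  constructor
  · rintro (rfl | ⟨i, rfl⟩ | ⟨⟨i, hi⟩, rfl⟩)
    · exact ⟨_, root⟩
    · exact ⟨_, child i⟩
    · exact ⟨_, leaf ⟨i, ⟨0, Nat.pos_of_ne_zero hi⟩⟩⟩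
  · rintro ⟨_ | i | l, rfl⟩
    · exact Or.inl root
    · exact Or.inr (Or.inl ⟨i, child i⟩)
    · exact Or.inr (Or.inr ⟨⟨l.1, fun h => (Fin.cast h l.2).elim0⟩, leaf l⟩)

end Spider

lemma exists_diam_le_three (x : ℤ) (hx : 1 < x) :
    ∃ T : SignedTree, T.Realizes (insert 1 (insert 0 {x})) ∧ T.G.diam ≤ 3 := by
  refine exists_spider (I := Option (Fin (x + 1).toNat)) (fun i => i.elim 1 fun _ => 0)
    (fun i => i.elim (-1) fun _ => 1) ?_ 3 ?_ _ ?_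
  · rintro (_ | i) <;> simp
  · -- Only one vertex has depth two.
    have huniq : ∀ l m : (Σ i : Option (Fin (x + 1).toNat), Fin (i.elim 1 fun _ => 0)), l = m := by
      rintro ⟨_ | i, l⟩ ⟨_ | j, m⟩
      · have : l = m := Subsingleton.elim (α := Fin 1) l m
        rw [this]
      · exact Fin.elim0 m
      · exact Fin.elim0 l
      · exact Fin.elim0 l
    intro a b hab
    rcases a with _ | i | l <;> rcases b with _ | j | m <;> simp only [spiderDepth] <;>
      first
      | omega
      | exact absurd (by rw [huniq l m]) hab
  · intro z
    have hroot : ∑ i : Option (Fin (x + 1).toNat), (i.elim (-1) fun _ => 1 : ℤ) = x := by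
      simp [Fintype.sum_option]
      omega
    rw [hroot]
    have h0 : 0 < (x + 1).toNat := by omega
    simp only [Set.mem_insert_iff, Set.mem_singleton_iff, Option.exists]
    simp
    constructor
    · rintro (h | h | h) <;> simp [h]
    · rintro (h | (h | ⟨-, h⟩) | h) <;> simp [h]

lemma exists_diam_le_four (X : Finset ℤ) (hne : X.Nonempty) (hx : ∀ x ∈ X, 1 < x) :
    ∃ T : SignedTree, T.Realizes (insert 1 (insert 0 (↑X : Set ℤ))) ∧ T.G.diam ≤ 4 := by
  refine exists_spider (I := X ⊕ X) (Sum.elim (fun x => (x.1 - 1).toNat) fun _ => 1)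
    (Sum.elim (fun _ => 1) fun _ => -1) ?_ 4 ?_ _ ?_
  · rintro (i | i) <;> simp
  · intro a b _
    rcases a with _ | i | l <;> rcases b with _ | j | m <;> simp [spiderDepth]
  · intro z
    obtain ⟨y, hy⟩ := hne
    have hcast : ∀ x ∈ X, (1 : ℤ) + ((x - 1).toNat : ℤ) = x := fun x h => by
      have := hx x h
      omega
    simp only [Fintype.sum_sum_type, Sum.exists, Sum.elim_inl, Sum.elim_inr, Set.mem_insert_iff,
      Finset.mem_coe]
    constructor
    · rintro (h | h | h)
      · exact Or.inr (Or.inr ⟨Or.inr ⟨⟨y, hy⟩, one_ne_zero⟩, h⟩)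
      · exact Or.inl (by simp [h])
      · exact Or.inr (Or.inl (Or.inl ⟨⟨z, h⟩, (hcast z h).symm⟩))
    · rintro (h | (⟨⟨x, hxX⟩, h⟩ | ⟨_, h⟩) | ⟨-, h⟩)
      · exact Or.inr (Or.inl (by simpa using h))
      · rw [hcast x hxX] at h
        exact Or.inr (Or.inr (h ▸ hxX))
      · exact Or.inr (Or.inl (by simpa using h))
      · exact Or.inl h

/-! ### Minimum diameter -/

lemma diamOfSet_eq {D : Set ℤ} {d : ℕ} (hex : ∃ T : SignedTree, T.Realizes D ∧ T.G.diam ≤ d)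
    (hlow : ∀ T : SignedTree, T.Realizes D → d ≤ T.G.diam) : diamOfSet D = d := by
  obtain ⟨T, hT, hTd⟩ := hex
  refine IsLeast.csInf_eq ⟨⟨T, hT, le_antisymm hTd (hlow T hT)⟩, ?_⟩
  rintro _ ⟨T', hT', rfl⟩
  exact hlow T' hT'

/-- For `D = {1, 0} ∪ X` with `X` a nonempty set of `n` distinct integers
each greater than 1: `diam(D) = 3` if `n = 1` and `diam(D) = 4` if `n > 1`. -/
theorem stmt_4 (n : ℕ) (X : Finset ℤ) (hcard : X.card = n) (hne : X.Nonempty)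
    (hx : ∀ x ∈ X, 1 < x) (D : Set ℤ) (hD : D = insert 1 (insert 0 (↑X : Set ℤ))) :
    (n = 1 → diamOfSet D = 3) ∧ (1 < n → diamOfSet D = 4) := by
  have hmem : ∀ T : SignedTree, T.Realizes D → ∀ z, (z = 0 ∨ z ∈ X) → ∃ v, T.sdeg v = z := by
    intro T hT z hz
    have : z ∈ Set.range T.sdeg := by
      rw [← hT, hD]
      rcases hz with h | h <;> simp [h]
    exact this
  constructor
  · intro h1
    obtain ⟨x, rfl⟩ := Finset.card_eq_one.1 (hcard.trans h1)
    have hx1 := hx x (Finset.mem_singleton_self x)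
    refine diamOfSet_eq (by simpa [hD] using exists_diam_le_three x hx1) fun T hT => ?_
    obtain ⟨u, hu⟩ := hmem T hT 0 (Or.inl rfl)
    obtain ⟨v, hv⟩ := hmem T hT x (Or.inr (Finset.mem_singleton_self x))
    exact T.three_le_diam hu (by rwa [hv])
  · intro h1
    obtain ⟨x, hxX, y, hyX, hxy⟩ := Finset.one_lt_card.1 (hcard.symm ▸ h1)
    refine diamOfSet_eq (hD ▸ exists_diam_le_four X hne hx) fun T hT => ?_
    obtain ⟨u, hu⟩ := hmem T hT 0 (Or.inl rfl)
    obtain ⟨v, hv⟩ := hmem T hT x (Or.inr hxX)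
    obtain ⟨w, hw⟩ := hmem T hT y (Or.inr hyX)
    exact T.four_le_diam hu (by rw [hv]; exact hx x hxX) (by rw [hw]; exact hx y hyX)
      (by rwa [hv, hw])
end

section
/- Let Y = {y_1, ..., y_m} be a nonempty finite set of m ≥ 1 distinct integers each less than −1, let X = {x_1, ..., x_n} be a (possibly empty) finite set of distinct integers each greater than 1, and let D = {1} ∪ Y ∪ X. Then diam(D) = diam(D ∪ {0}). -/
/-! ### Eccentricities in a tree -/

/-- Both neighbours cannot be closer to `u` than `v`: they would give two shortest paths from `v`
to `u`. -/
theorem SimpleGraph.IsTree.fork {V : Type*} {G : SimpleGraph V} (hG : G.IsTree) {v a b : V}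
    (ha : G.Adj v a) (hb : G.Adj v b) (hab : a ≠ b) (u : V) :
    G.dist a u = G.dist v u + 1 ∨ G.dist b u = G.dist v u + 1 := by
  have h1 := hG.dist_eq_dist_add_one_of_adj u ha
  have h2 := hG.dist_eq_dist_add_one_of_adj u hb
  simp only [SimpleGraph.dist_comm (u := u)] at h1 h2
  by_contra! hcon
  have h1' : G.dist v u = G.dist a u + 1 := h1.resolve_right hcon.1
  have h2' : G.dist v u = G.dist b u + 1 := h2.resolve_right hcon.2
  obtain ⟨p, -, hp⟩ := hG.connected.exists_path_of_dist a u
  obtain ⟨q, -, hq⟩ := hG.connected.exists_path_of_dist b u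
  have hp' : (SimpleGraph.Walk.cons ha p).IsPath :=
    SimpleGraph.Walk.isPath_of_length_eq_dist _ (by simp [hp, h1'])
  have hq' : (SimpleGraph.Walk.cons hb q).IsPath :=
    SimpleGraph.Walk.isPath_of_length_eq_dist _ (by simp [hq, h2'])
  have := congrArg (fun r => r.1.snd)
    ((hG.isAcyclic.subsingleton_path v u).elim ⟨_, hp'⟩ ⟨_, hq'⟩)
  exact hab (by simpa using this)

namespace SignedTree

/-- The signed degree of `v` as a sum over all vertices `w`. -/
theorem sdeg_eq_sum (T : SignedTree) (v : Fin T.n) :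
    T.sdeg v = ∑ w, open Classical in
      if T.G.Adj v w then (if T.sgn s(v, w) = true then (1 : ℤ) else -1) else 0 := by
  classical
  let _ := T.adjDec
  unfold sdeg
  rw [Finset.card_filter, Finset.card_filter]
  push_cast
  rw [← Finset.sum_sub_distrib, SimpleGraph.neighborFinset_eq_filter, Finset.sum_filter]
  refine Finset.sum_congr rfl fun w _ => ?_
  by_cases h : T.G.Adj v w <;> cases T.sgn s(v, w) <;> simp [h]

theorem dist_le_diam (T : SignedTree) (u v : Fin T.n) : T.G.dist u v ≤ T.G.diam :=
  have : Nonempty (Fin T.n) := ⟨u⟩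
  SimpleGraph.dist_le_diam (SimpleGraph.connected_iff_ediam_ne_top.1 T.isTree.connected)

/-- If `a` is a neighbour of `v` and the signed degree of `v` is not the sign of the edge `v a`,
then `v` is not a leaf. -/
theorem exists_other_adj (T : SignedTree) {v a : Fin T.n} (h : T.G.Adj v a)
    (hs : T.sdeg v ≠ if T.sgn s(v, a) = true then 1 else -1) : ∃ b, T.G.Adj v b ∧ b ≠ a := by
  by_contra! hcon
  apply hs
  rw [sdeg_eq_sum, Fintype.sum_eq_single a, if_pos h]
  intro b hb
  rw [if_neg fun h' => hb (hcon b h')]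

/-- A vertex with two neighbours has eccentricity at most `diam - 1`. -/
theorem dist_add_one_le (T : SignedTree) {v a b : Fin T.n} (ha : T.G.Adj v a) (hb : T.G.Adj v b)
    (hab : a ≠ b) (u : Fin T.n) : T.G.dist v u + 1 ≤ T.G.diam := by
  have h1 := T.dist_le_diam a u
  have h2 := T.dist_le_diam b u
  rcases T.isTree.fork ha hb hab u with h | h <;> omega

/-! ### Attaching a leaf -/

/-- `T'` arises from `T` by attaching a new leaf `l` to the vertex `v` by an edge of sign `b`;
the map `f` includes the vertices of `T` into those of `T'`. The fields record what this means for
vertices and signed degrees, and upper bounds for distances; adjacency in `T'` is not recorded. -/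
structure LeafExt (T : SignedTree) (v : Fin T.n) (b : Bool) (T' : SignedTree)
    (f : Fin T.n → Fin T'.n) (l : Fin T'.n) : Prop where
  inj : Function.Injective f
  ne_new : ∀ u, f u ≠ l
  cover : ∀ x, x = l ∨ ∃ u, x = f u
  sdeg_old : ∀ u, T'.sdeg (f u) = T.sdeg u + if u = v then (if b = true then 1 else -1) else 0
  sdeg_new : T'.sdeg l = if b = true then 1 else -1
  dist_old : ∀ u w, T'.G.dist (f u) (f w) ≤ T.G.dist u w
  dist_new : ∀ u, T'.G.dist l (f u) ≤ T.G.dist v u + 1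

theorem exists_leafExt (T : SignedTree) (v : Fin T.n) (b : Bool) :
    ∃ T' f l, LeafExt T v b T' f l := by
  classical
  let e : Fin T.n ↪ Fin (T.n + 1) := Fin.castSuccEmb
  let G' : SimpleGraph (Fin (T.n + 1)) :=
    T.G.map e ⊔ SimpleGraph.edge v.castSucc (Fin.last T.n)
  have adj_old : ∀ u w : Fin T.n, G'.Adj u.castSucc w.castSucc ↔ T.G.Adj u w := by
    intro u w
    have h : (T.G.map e).Adj (e u) (e w) ↔ T.G.Adj u w := SimpleGraph.map_adj_apply
    have h1 := (Fin.castSucc_lt_last u).ne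
    have h2 := (Fin.castSucc_lt_last w).ne
    simp only [G', SimpleGraph.sup_adj, SimpleGraph.edge_adj]
    constructor
    · rintro (h' | h')
      · exact h.1 h'
      · exact absurd h' (by simp [h1, h2])
    · exact fun h' => Or.inl (h.2 h')
  have adj_new : ∀ u : Fin T.n, G'.Adj u.castSucc (Fin.last T.n) ↔ u = v := by
    intro u
    have h1 := (Fin.castSucc_lt_last u).ne
    have h2 := fun w : Fin T.n => (Fin.castSucc_lt_last w).ne
    simp only [G', SimpleGraph.sup_adj, SimpleGraph.edge_adj, SimpleGraph.map_adj]
    constructor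
    · rintro (⟨x, y, -, -, hy⟩ | h')
      · exact absurd hy (h2 y)
      · simpa [h1] using h'
    · rintro rfl
      simp [h1]
  let φ : T.G →g G' := ⟨Fin.castSucc, fun h => (adj_old _ _).2 h⟩
  have conn : T.G.Connected := T.isTree.connected
  have hvl : G'.Adj v.castSucc (Fin.last T.n) := (adj_new v).2 rfl
  have reach : ∀ x, G'.Reachable v.castSucc x := by
    intro x
    refine Fin.lastCases hvl.reachable (fun u => ?_) x
    exact (conn.preconnected v u).map φ
  have conn' : G'.Connected :=
    { preconnected := fun x y => (reach x).symm.trans (reach y)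
      nonempty := ⟨Fin.last _⟩ }
  have tree' : G'.IsTree := by
    -- one vertex and one edge more than `T`
    rw [SimpleGraph.isTree_iff_connected_and_card]
    refine ⟨conn', ?_⟩
    have hc := (SimpleGraph.isTree_iff_connected_and_card.1 T.isTree).2
    have hE : G'.edgeSet = insert s(v.castSucc, Fin.last T.n)
        (Sym2.map Fin.castSucc '' T.G.edgeSet) := by
      have h1 : (T.G.map e).edgeSet = Sym2.map Fin.castSucc '' T.G.edgeSet :=
        SimpleGraph.edgeSet_map e T.G
      simp only [G', SimpleGraph.edgeSet_sup, h1]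
      rw [SimpleGraph.edgeSet_edge_of_ne hvl.ne, Set.union_comm, Set.insert_eq]
    have hnot : s(v.castSucc, Fin.last T.n) ∉ Sym2.map Fin.castSucc '' T.G.edgeSet := by
      rintro ⟨z, -, hz⟩
      have : Fin.last T.n ∈ Sym2.map Fin.castSucc z := by rw [hz]; simp
      obtain ⟨y, -, hy⟩ := Sym2.mem_map.1 this
      exact (Fin.castSucc_lt_last y).ne hy
    rw [Nat.card_coe_set_eq] at hc ⊢
    rw [hE, Set.ncard_insert_of_notMem hnot (Set.toFinite _),
      Set.ncard_image_of_injective _ (Sym2.map.injective (Fin.castSucc_injective _)), hc]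
    simp
  let g : Fin (T.n + 1) → Fin T.n := Fin.lastCases v id
  let s' : Sym2 (Fin (T.n + 1)) → Bool := fun z => if Fin.last T.n ∈ z then b else T.sgn (z.map g)
  have s_old : ∀ u w : Fin T.n, s' s(u.castSucc, w.castSucc) = T.sgn s(u, w) := by
    intro u w
    have h1 := (Fin.castSucc_lt_last u).ne'
    have h2 := (Fin.castSucc_lt_last w).ne'
    simp [s', g, h1, h2]
  have s_new : ∀ u : Fin T.n, s' s(u.castSucc, Fin.last T.n) = b := by
    intro u
    simp [s']
  have s_new' : ∀ u : Fin T.n, s' s(Fin.last T.n, u.castSucc) = b := by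
    intro u
    simp [s']
  have d_old : ∀ u w : Fin T.n, G'.dist u.castSucc w.castSucc ≤ T.G.dist u w := by
    intro u w
    obtain ⟨p, hp⟩ := conn.exists_walk_length_eq_dist u w
    rw [← hp, ← p.length_map φ]
    exact SimpleGraph.dist_le (p.map φ)
  refine ⟨⟨T.n + 1, G', Classical.decRel _, tree', s'⟩, Fin.castSucc, Fin.last T.n,
    Fin.castSucc_injective _, fun u => (Fin.castSucc_lt_last u).ne, ?_, ?_, ?_, d_old, ?_⟩
  · intro x
    exact Fin.lastCases (Or.inl rfl) (fun u => Or.inr ⟨u, rfl⟩) x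
  · intro u
    rw [sdeg_eq_sum, sdeg_eq_sum]
    refine (Fin.sum_univ_castSucc _).trans ?_
    simp only [adj_old, adj_new, s_old, s_new]
  · rw [sdeg_eq_sum]
    refine (Fin.sum_univ_castSucc _).trans ?_
    simp [SimpleGraph.adj_comm G' (Fin.last T.n), adj_new, s_new']
  · intro u
    have h := conn'.dist_triangle (u := Fin.last T.n) (v := v.castSucc) (w := u.castSucc)
    rw [SimpleGraph.dist_eq_one_iff_adj.2 hvl.symm] at h
    have h2 := d_old v u
    show G'.dist _ _ ≤ _
    omega

theorem LeafExt.diam_le {T T' : SignedTree} {v b f l} (h : LeafExt T v b T' f l) {k : ℕ}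
    (hk : T.G.diam ≤ k) (hv : ∀ u, T.G.dist v u + 1 ≤ k) : T'.G.diam ≤ k := by
  have : Nonempty (Fin T'.n) := ⟨l⟩
  obtain ⟨x, y, hxy⟩ := SimpleGraph.exists_dist_eq_diam (G := T'.G)
  rw [← hxy]
  rcases h.cover x with rfl | ⟨u, rfl⟩ <;> rcases h.cover y with rfl | ⟨w, rfl⟩
  · simp
  · exact (h.dist_new w).trans (hv w)
  · rw [SimpleGraph.dist_comm]
    exact (h.dist_new u).trans (hv u)
  · exact (h.dist_old u w).trans ((T.dist_le_diam u w).trans hk)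

/-! ### Removing the signed degree `0` -/

/-- Attaching positive leaves to all vertices of signed degree `0`, by induction on their
number. -/
theorem exists_realizes_aux {D : Set ℤ} (h1 : (1 : ℤ) ∈ D) (h0 : (0 : ℤ) ∉ D) (N : ℕ) :
    ∀ T : SignedTree, (Finset.univ.filter fun u => T.sdeg u = 0).card ≤ N →
      D ⊆ Set.range T.sdeg → Set.range T.sdeg ⊆ insert 0 D →
      ∃ T' : SignedTree, T'.Realizes D ∧ T'.G.diam ≤ T.G.diam := by
  induction N with
  | zero =>
    intro T hN hD hT
    refine ⟨T, hD.antisymm ?_, le_rfl⟩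
    rintro _ ⟨u, rfl⟩
    rcases hT ⟨u, rfl⟩ with h | h
    · simp only [Nat.le_zero, Finset.card_eq_zero, Finset.filter_eq_empty_iff] at hN
      exact absurd h (hN (Finset.mem_univ u))
    · exact h
  | succ N ih =>
    intro T hN hD hT
    by_cases hz : ∃ v, T.sdeg v = 0
    · obtain ⟨v, hv⟩ := hz
      obtain ⟨w, hw⟩ := hD h1
      have hvw : v ≠ w := by rintro rfl; omega
      have : Nontrivial (Fin T.n) := ⟨v, w, hvw⟩
      obtain ⟨a, ha⟩ := T.isTree.connected.preconnected.exists_adj_of_nontrivial v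
      obtain ⟨b, hb, hba⟩ := T.exists_other_adj ha (by rw [hv]; split_ifs <;> simp)
      obtain ⟨T', f, l, hE⟩ := T.exists_leafExt v true
      have hd : T'.G.diam ≤ T.G.diam :=
        hE.diam_le le_rfl (T.dist_add_one_le ha hb hba.symm)
      have hl : T'.sdeg l = 1 := by simp [hE.sdeg_new]
      have hfv : T'.sdeg (f v) = 1 := by simp [hE.sdeg_old, hv]
      have hf : ∀ u, u ≠ v → T'.sdeg (f u) = T.sdeg u := fun u hu => by simp [hE.sdeg_old, hu]
      refine (ih T' ?_ ?_ ?_).imp fun T'' h => ⟨h.1, h.2.trans hd⟩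
      · have hsub : (Finset.univ.filter fun u => T'.sdeg u = 0) ⊆
            ((Finset.univ.filter fun u => T.sdeg u = 0).erase v).image f := by
          intro x hx
          simp only [Finset.mem_filter, Finset.mem_univ, true_and] at hx
          rcases hE.cover x with rfl | ⟨u, rfl⟩
          · omega
          · have huv : u ≠ v := by rintro rfl; omega
            rw [hf u huv] at hx
            exact Finset.mem_image_of_mem _ (by simp [huv, hx])
        have := (Finset.card_le_card hsub).trans Finset.card_image_le
        rw [Finset.card_erase_of_mem (by simp [hv])] at this
        omega
      · intro d hd
        obtain ⟨u, rfl⟩ := hD hd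
        exact ⟨f u, hf u (by rintro rfl; exact h0 (hv ▸ hd))⟩
      · rintro _ ⟨x, rfl⟩
        rcases hE.cover x with rfl | ⟨u, rfl⟩
        · exact hl ▸ Or.inr h1
        · by_cases huv : u = v
          · subst huv
            exact hfv ▸ Or.inr h1
          · exact hf u huv ▸ hT ⟨u, rfl⟩
    · refine ⟨T, hD.antisymm ?_, le_rfl⟩
      rintro _ ⟨u, rfl⟩
      exact (hT ⟨u, rfl⟩).resolve_left fun h => hz ⟨u, h⟩

theorem exists_realizes_of_union_zero {D : Set ℤ} (h1 : (1 : ℤ) ∈ D) (h0 : (0 : ℤ) ∉ D)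
    (T : SignedTree) (hT : T.Realizes (D ∪ {0})) :
    ∃ T' : SignedTree, T'.Realizes D ∧ T'.G.diam ≤ T.G.diam := by
  unfold Realizes at hT
  refine exists_realizes_aux h1 h0 _ T le_rfl ?_ ?_
  · rw [← hT]
    exact Set.subset_union_left
  · rw [← hT, Set.union_singleton]

/-! ### Adding the signed degree `0` -/

theorem exists_realizes_union_zero {D : Set ℤ} (h1 : (1 : ℤ) ∈ D) (hm : (-1 : ℤ) ∉ D) {y : ℤ}
    (hyD : y ∈ D) (hy : y < -1) (T : SignedTree) (hT : T.Realizes D) :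
    ∃ T' : SignedTree, T'.Realizes (D ∪ {0}) ∧ T'.G.diam ≤ T.G.diam := by
  unfold Realizes at hT
  obtain ⟨v, hv⟩ : y ∈ Set.range T.sdeg := hT ▸ hyD
  have hmem : ∀ u, T.sdeg u ∈ D := fun u => hT ▸ ⟨u, rfl⟩
  obtain ⟨a, b, ha, hb, hab, hsa, hsb⟩ : ∃ a b, T.G.Adj v a ∧ T.G.Adj v b ∧ a ≠ b ∧
      T.sgn s(v, a) = false ∧ T.sgn s(v, b) = false := by
    let _ := T.adjDec
    have h2 : 1 < ((T.G.neighborFinset v).filter fun w => T.sgn s(v, w) = false).card := by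
      unfold sdeg at hv
      omega
    obtain ⟨a, ha, b, hb, hab⟩ := Finset.one_lt_card.1 h2
    simp only [Finset.mem_filter, SimpleGraph.mem_neighborFinset] at ha hb
    exact ⟨a, b, ha.1, hb.1, hab, ha.2, hb.2⟩
  -- the two negative neighbours of `v` are not leaves, hence have eccentricity `≤ diam - 1`
  have key : ∀ c, T.G.Adj v c → T.sgn s(v, c) = false →
      ∀ u, T.G.dist c u + 1 ≤ T.G.diam := by
    intro c hc hs
    obtain ⟨d, hd, hdv⟩ := T.exists_other_adj hc.symm (by
      rw [Sym2.eq_swap, hs]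
      intro h
      exact hm (by simpa [h] using hmem c))
    exact T.dist_add_one_le hc.symm hd hdv.symm
  have ecc : ∀ u, T.G.dist v u + 2 ≤ T.G.diam := by
    intro u
    have h1 := key a ha hsa u
    have h2 := key b hb hsb u
    rcases T.isTree.fork ha hb hab u with h | h <;> omega
  have hk3 : 3 ≤ T.G.diam := by
    have h := ecc a
    rw [SimpleGraph.dist_eq_one_iff_adj.2 ha] at h
    omega
  obtain ⟨T₁, f₁, w, h₁⟩ := T.exists_leafExt v false
  have hd₁ : T₁.G.diam ≤ T.G.diam := h₁.diam_le le_rfl fun u => by have := ecc u; omega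
  obtain ⟨T₂, f₂, l, h₂⟩ := T₁.exists_leafExt w true
  have hd₂ : T₂.G.diam ≤ T.G.diam := by
    refine h₂.diam_le hd₁ fun x => ?_
    rcases h₁.cover x with rfl | ⟨u, rfl⟩
    · rw [SimpleGraph.dist_self]; omega
    · have := h₁.dist_new u
      have := ecc u
      omega
  have hwv : T₁.G.dist w (f₁ v) ≤ 1 := by simpa using h₁.dist_new v
  obtain ⟨T₃, f₃, l', h₃⟩ := T₂.exists_leafExt (f₂ (f₁ v)) true
  have hd₃ : T₃.G.diam ≤ T.G.diam := by
    refine h₃.diam_le hd₂ fun x => ?_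
    rcases h₂.cover x with rfl | ⟨z, rfl⟩
    · have := h₂.dist_new (f₁ v)
      rw [SimpleGraph.dist_comm]
      omega
    · have := h₂.dist_old (f₁ v) z
      rcases h₁.cover z with rfl | ⟨u, rfl⟩
      · rw [SimpleGraph.dist_comm] at hwv
        omega
      · have := h₁.dist_old v u
        have := ecc u
        omega
  have e_old : ∀ u, T₃.sdeg (f₃ (f₂ (f₁ u))) = T.sdeg u := by
    intro u
    rw [h₃.sdeg_old, h₂.sdeg_old, h₁.sdeg_old, if_neg (h₁.ne_new u)]
    by_cases huv : u = v
    · simp [huv]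
    · have : f₂ (f₁ u) ≠ f₂ (f₁ v) := fun h => huv (h₁.inj (h₂.inj h))
      simp [huv, this]
  have e_w : T₃.sdeg (f₃ (f₂ w)) = 0 := by
    have : f₂ w ≠ f₂ (f₁ v) := fun h => h₁.ne_new v (h₂.inj h).symm
    rw [h₃.sdeg_old, if_neg this, h₂.sdeg_old, h₁.sdeg_new]
    simp
  have e_l : T₃.sdeg (f₃ l) = 1 := by
    rw [h₃.sdeg_old, if_neg (h₂.ne_new _).symm, h₂.sdeg_new]
    simp
  have e_l' : T₃.sdeg l' = 1 := by simp [h₃.sdeg_new]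
  refine ⟨T₃, ?_, hd₃⟩
  unfold Realizes
  apply Set.Subset.antisymm
  · rintro d (hd | rfl)
    · obtain ⟨u, rfl⟩ : d ∈ Set.range T.sdeg := hT ▸ hd
      exact ⟨_, e_old u⟩
    · exact ⟨_, e_w⟩
  · rintro _ ⟨x, rfl⟩
    rcases h₃.cover x with rfl | ⟨x, rfl⟩
    · exact Or.inl (e_l' ▸ h1)
    rcases h₂.cover x with rfl | ⟨x, rfl⟩
    · exact Or.inl (e_l ▸ h1)
    rcases h₁.cover x with rfl | ⟨u, rfl⟩
    · exact Or.inr e_w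
    · exact Or.inl (e_old u ▸ hmem u)

end SignedTree

/-! ### Comparing the minima -/

/-- If each element of either set dominates an element of the other, then the infima agree (also
when the sets are empty). -/
theorem sInf_eq_of_forall_exists_le {A B : Set ℕ} (hAB : ∀ a ∈ A, ∃ b ∈ B, b ≤ a)
    (hBA : ∀ b ∈ B, ∃ a ∈ A, a ≤ b) : sInf A = sInf B := by
  rcases A.eq_empty_or_nonempty with rfl | hA
  · have : B = ∅ := Set.eq_empty_of_forall_notMem fun b hb => by
      obtain ⟨a, ha, -⟩ := hBA b hb
      exact ha
    rw [this]
  · obtain ⟨b, hb, hbA⟩ := hAB _ (Nat.sInf_mem hA)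
    obtain ⟨a, ha, haB⟩ := hBA _ (Nat.sInf_mem ⟨b, hb⟩)
    exact le_antisymm ((Nat.sInf_le ha).trans haB) ((Nat.sInf_le hb).trans hbA)

/-- For `D = {1} ∪ Y ∪ X` with `Y` a nonempty set of distinct integers
each less than `-1` and `X` a (possibly empty) set of distinct integers each greater
than 1: `diam(D) = diam(D ∪ {0})`. -/
theorem stmt_9 (Y : Finset ℤ) (hYne : Y.Nonempty) (hy : ∀ y ∈ Y, y < -1)
    (X : Finset ℤ) (hx : ∀ x ∈ X, 1 < x)
    (D : Set ℤ) (hD : D = insert 1 ((↑Y : Set ℤ) ∪ (↑X : Set ℤ))) :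
    diamOfSet D = diamOfSet (D ∪ {0}) := by
  subst hD
  obtain ⟨y, hyY⟩ := hYne
  have h1 : (1 : ℤ) ∈ insert 1 ((↑Y : Set ℤ) ∪ (↑X : Set ℤ)) := Set.mem_insert _ _
  have hnot : ∀ z : ℤ, -1 ≤ z → z < 1 → z ∉ insert 1 ((↑Y : Set ℤ) ∪ (↑X : Set ℤ)) := by
    rintro z hz1 hz2 (h | h | h)
    · omega
    · have := hy z h
      omega
    · have := hx z h
      omega
  have hyD : y ∈ insert 1 ((↑Y : Set ℤ) ∪ (↑X : Set ℤ)) := Or.inr (Or.inl hyY)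
  apply sInf_eq_of_forall_exists_le
  · rintro _ ⟨T, hT, rfl⟩
    obtain ⟨T', hT', hd⟩ := SignedTree.exists_realizes_union_zero h1
      (hnot (-1) le_rfl (by norm_num)) hyD (hy y hyY) T hT
    exact ⟨_, ⟨T', hT', rfl⟩, hd⟩
  · rintro _ ⟨T, hT, rfl⟩
    obtain ⟨T', hT', hd⟩ := SignedTree.exists_realizes_of_union_zero h1
      (hnot 0 (by norm_num) (by norm_num)) T hT
    exact ⟨_, ⟨T', hT', rfl⟩, hd⟩
end
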